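/- Let d = 1, S = {−1,1}, and let μ be the product measure on Ω = {−1,1}^Z with μ(σ_i = 1) = μ(σ_i = −1) = 1/2 for each i. For L ∈ ℕ set m_L(σ) = Σ_{i=−L}^{L} σ_i and g_L(σ) = √(|m_L(σ)|). Then sup_L Lip_2(g_L) ≤ 4, where Lip_2(g_L) is the Lipschitz constant of g_L with respect to the distance d_{2,Λ_L}(σ,η) = (Σ_{i=−L}^{L} 1{σ_i ≠ η_i})^{1/2}, while liminf_{L→∞} log ∫ e^{g_L − μ(g_L)} dμ = +∞. -/

import Mathlib

/-!
The Lipschitz bound follows from `|√x - √y| ≤ √|x - y|` and `|m_L(σ) - m_L(η)| ≤ 2 d₂(σ,η)²`.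

For the divergence, let `n = 2L+1` and `s = n^{1/4}`. By independence of the spins, `E m² = n` and
`E m⁴ = 3n² - 2n`. Since `g⁴ = m²`, Jensen's inequality gives `E g ≤ s`. Moreover
`exp (g - s) ≥ (g⁸ - 2 n g⁴) / (11⁸ · 8!)` pointwise: the right side is nonpositive when `g⁴ ≤ 2n`,
and when `g⁴ > 2n` one has `g - s ≥ g / 11`, so that the degree-8 term of the exponential series
suffices. Integrating, `E exp (g - E g) ≥ (E m⁴ - 2 n E m²) / (11⁸ · 8!) = (n² - 2n) / (11⁸ · 8!)`,
which tends to infinity.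
-/

open MeasureTheory Filter

namespace GCBStmt19

instance : MeasurableSpace ℤˣ := ⊤
instance : MeasurableSingletonClass ℤˣ := ⟨fun _ => trivial⟩

/-- The configuration space `Ω = {-1,1}^ℤ`, realized with single-site space `ℤˣ = {1,-1}`. -/
abbrev Ω : Type := ℤ → ℤˣ

/-- `m_L(σ) = Σ_{i=-L}^{L} σ_i` (as a real number). -/
noncomputable def mL (L : ℕ) (σ : Ω) : ℝ :=
  ∑ i ∈ Finset.Icc (-(L : ℤ)) (L : ℤ), ((σ i : ℤ) : ℝ)

/-- `g_L(σ) = √|m_L(σ)|`. -/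
noncomputable def gL (L : ℕ) (σ : Ω) : ℝ := Real.sqrt |mL L σ|

/-- The `ℓ²`-type distance on `Ω_{Λ_L}` built from the discrete distance on `{-1,1}`. -/
noncomputable def d2 (L : ℕ) (σ η : Ω) : ℝ :=
  Real.sqrt (∑ i ∈ Finset.Icc (-(L : ℤ)) (L : ℤ), if σ i ≠ η i then (1 : ℝ) else 0)

/-- The sum of the spins in a finite region, as a real number. -/
noncomputable def spinSum (Λ : Finset ℤ) (σ : Ω) : ℝ := ∑ i ∈ Λ, ((σ i : ℤ) : ℝ)

lemma spin_sq (u : ℤˣ) : ((u : ℤ) : ℝ) ^ 2 = 1 := by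
  rcases Int.units_eq_one_or u with h | h <;> simp [h]

lemma abs_spin (u : ℤˣ) : |((u : ℤ) : ℝ)| = 1 := by
  rcases Int.units_eq_one_or u with h | h <;> simp [h]

lemma measurable_spin (i : ℤ) : Measurable (fun σ : Ω => ((σ i : ℤ) : ℝ)) :=
  (measurable_of_finite (fun u : ℤˣ => ((u : ℤ) : ℝ))).comp (measurable_pi_apply i)

lemma measurable_spinSum (Λ : Finset ℤ) : Measurable (spinSum Λ) :=
  Finset.measurable_sum Λ fun i _ => measurable_spin i

lemma abs_spinSum_le (Λ : Finset ℤ) (σ : Ω) : |spinSum Λ σ| ≤ Λ.card := by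
  refine (Finset.abs_sum_le_sum_abs _ _).trans ?_
  simp [abs_spin]

lemma integrable_spinSum_pow (μ : Measure Ω) [IsProbabilityMeasure μ] (Λ : Finset ℤ) (k : ℕ) :
    Integrable (fun σ => spinSum Λ σ ^ k) μ := by
  refine Integrable.of_bound ((measurable_spinSum Λ).pow_const k).aestronglyMeasurable
    ((Λ.card : ℝ) ^ k) (ae_of_all _ fun σ => ?_)
  rw [Real.norm_eq_abs, abs_pow]
  exact pow_le_pow_left₀ (abs_nonneg _) (abs_spinSum_le Λ σ) k

lemma integrable_spinSum_pow_mul_spin (μ : Measure Ω) [IsProbabilityMeasure μ] (Λ : Finset ℤ)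
    (k : ℕ) (i : ℤ) : Integrable (fun σ => spinSum Λ σ ^ k * ((σ i : ℤ) : ℝ)) μ := by
  refine Integrable.mul_of_top_left (integrable_spinSum_pow μ Λ k) ?_
  refine memLp_top_of_bound (measurable_spin i).aestronglyMeasurable 1 (ae_of_all _ fun σ => ?_)
  rw [Real.norm_eq_abs, abs_spin]

lemma map_eval_singleton (μ : Measure Ω)
    (hμ : ∀ (Λ : Finset ℤ) (η : ℤ → ℤˣ),
      μ {σ : Ω | ∀ i ∈ Λ, σ i = η i} = (1 / 2 : ENNReal) ^ Λ.card)
    (i : ℤ) (u : ℤˣ) : (μ.map (fun σ : Ω => σ i)) {u} = 1 / 2 := by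
  rw [Measure.map_apply (measurable_pi_apply i) (measurableSet_singleton u)]
  have h := hμ {i} (fun _ => u)
  simp only [Finset.mem_singleton, forall_eq, Finset.card_singleton, pow_one] at h
  exact h

/-- The cylinder probabilities force the finite-dimensional marginals to be product measures. -/
lemma iIndepFun_eval (μ : Measure Ω) [IsProbabilityMeasure μ]
    (hμ : ∀ (Λ : Finset ℤ) (η : ℤ → ℤˣ),
      μ {σ : Ω | ∀ i ∈ Λ, σ i = η i} = (1 / 2 : ENNReal) ^ Λ.card) :
    ProbabilityTheory.iIndepFun (fun (i : ℤ) (σ : Ω) => σ i) μ := by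
  rw [ProbabilityTheory.iIndepFun_iff_finset]
  intro s
  rw [ProbabilityTheory.iIndepFun_iff_map_fun_eq_pi_map
    (f := s.restrict fun (i : ℤ) (σ : Ω) => σ i)
    (fun i => (measurable_pi_apply (i : ℤ)).aemeasurable)]
  have : ∀ i : s, IsProbabilityMeasure (μ.map (fun σ : Ω => σ i)) := fun i =>
    Measure.isProbabilityMeasure_map (measurable_pi_apply _).aemeasurable
  refine Measure.ext_of_singleton fun η => ?_
  change μ.map (fun (σ : Ω) (i : s) => σ i) {η}
    = Measure.pi (fun i : s => μ.map (fun σ : Ω => σ i)) {η}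
  rw [Measure.map_apply (measurable_pi_lambda _ fun i => measurable_pi_apply _)
    (measurableSet_singleton η), Measure.pi_singleton]
  have h := hμ s (fun i => if hi : i ∈ s then η ⟨i, hi⟩ else 1)
  simp only [map_eval_singleton μ hμ, Finset.prod_const, Finset.card_univ, Fintype.card_coe]
  rw [← h]
  congr 1
  ext σ
  simp only [Set.mem_preimage, Set.mem_singleton_iff, Set.mem_ofPred_eq, funext_iff]
  constructor
  · intro H i hi
    simpa [hi] using H ⟨i, hi⟩
  · rintro H ⟨i, hi⟩
    simpa [hi] using H i hi

lemma integral_spin (μ : Measure Ω) [IsProbabilityMeasure μ]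
    (hμ : ∀ (Λ : Finset ℤ) (η : ℤ → ℤˣ),
      μ {σ : Ω | ∀ i ∈ Λ, σ i = η i} = (1 / 2 : ENNReal) ^ Λ.card)
    (i : ℤ) : ∫ σ : Ω, ((σ i : ℤ) : ℝ) ∂μ = 0 := by
  have : IsProbabilityMeasure (μ.map (fun σ : Ω => σ i)) :=
    Measure.isProbabilityMeasure_map (measurable_pi_apply _).aemeasurable
  have h := integral_map (μ := μ) (φ := fun σ : Ω => σ i) (measurable_pi_apply i).aemeasurable
    (f := fun u : ℤˣ => ((u : ℤ) : ℝ)) (measurable_of_finite _).aestronglyMeasurable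
  rw [← h, integral_fintype Integrable.of_finite]
  simp [measureReal_def, map_eval_singleton μ hμ, UnitsInt.univ]

lemma integral_spinSum_pow_mul_spin (μ : Measure Ω) [IsProbabilityMeasure μ]
    (hμ : ∀ (Λ : Finset ℤ) (η : ℤ → ℤˣ),
      μ {σ : Ω | ∀ i ∈ Λ, σ i = η i} = (1 / 2 : ENNReal) ^ Λ.card)
    (Λ : Finset ℤ) (i : ℤ) (hi : i ∉ Λ) (k : ℕ) :
    ∫ σ : Ω, spinSum Λ σ ^ k * ((σ i : ℤ) : ℝ) ∂μ = 0 := by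
  have h1 : ProbabilityTheory.iIndepFun (fun (i : ℤ) (σ : Ω) => ((σ i : ℤ) : ℝ)) μ :=
    (iIndepFun_eval μ hμ).comp (fun _ u => ((u : ℤ) : ℝ)) (fun _ => measurable_of_finite _)
  have h2 : ProbabilityTheory.IndepFun (spinSum Λ) (fun σ : Ω => ((σ i : ℤ) : ℝ)) μ := by
    have := h1.indepFun_finsetSum_of_notMem measurable_spin hi
    convert this using 1
    ext σ
    simp [spinSum]
  have h3 : ProbabilityTheory.IndepFun (fun σ => spinSum Λ σ ^ k)
      (fun σ : Ω => ((σ i : ℤ) : ℝ)) μ :=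
    h2.comp (φ := fun x : ℝ => x ^ k) (ψ := id) (measurable_id.pow_const k) measurable_id
  rw [h3.integral_fun_mul_eq_mul_integral
    ((measurable_spinSum Λ).pow_const k).aestronglyMeasurable
    (measurable_spin i).aestronglyMeasurable, integral_spin μ hμ, mul_zero]

lemma integral_spinSum_sq (μ : Measure Ω) [IsProbabilityMeasure μ]
    (hμ : ∀ (Λ : Finset ℤ) (η : ℤ → ℤˣ),
      μ {σ : Ω | ∀ i ∈ Λ, σ i = η i} = (1 / 2 : ENNReal) ^ Λ.card)
    (Λ : Finset ℤ) : ∫ σ, spinSum Λ σ ^ 2 ∂μ = Λ.card := by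
  induction Λ using Finset.induction_on with
  | empty => simp [spinSum]
  | insert i Λ hi ih =>
    have e : ∀ σ, spinSum (insert i Λ) σ ^ 2
        = (spinSum Λ σ ^ 2 + 2 * (spinSum Λ σ ^ 1 * ((σ i : ℤ) : ℝ))) + 1 := by
      intro σ
      have h : spinSum (insert i Λ) σ = ((σ i : ℤ) : ℝ) + spinSum Λ σ := Finset.sum_insert hi
      rw [h]
      linear_combination spin_sq (σ i)
    simp only [e]
    have I1 := integrable_spinSum_pow μ Λ 2
    have I2 := (integrable_spinSum_pow_mul_spin μ Λ 1 i).const_mul 2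
    rw [integral_add (I1.fun_add I2) (integrable_const _), integral_add I1 I2, integral_const_mul,
      integral_spinSum_pow_mul_spin μ hμ Λ i hi, ih, Finset.card_insert_of_notMem hi]
    simp

lemma integral_spinSum_four (μ : Measure Ω) [IsProbabilityMeasure μ]
    (hμ : ∀ (Λ : Finset ℤ) (η : ℤ → ℤˣ),
      μ {σ : Ω | ∀ i ∈ Λ, σ i = η i} = (1 / 2 : ENNReal) ^ Λ.card)
    (Λ : Finset ℤ) :
    ∫ σ, spinSum Λ σ ^ 4 ∂μ = 3 * (Λ.card : ℝ) ^ 2 - 2 * Λ.card := by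
  induction Λ using Finset.induction_on with
  | empty => simp [spinSum]
  | insert i Λ hi ih =>
    have e : ∀ σ, spinSum (insert i Λ) σ ^ 4
        = (((spinSum Λ σ ^ 4 + 4 * (spinSum Λ σ ^ 3 * ((σ i : ℤ) : ℝ)))
          + 6 * spinSum Λ σ ^ 2) + 4 * (spinSum Λ σ ^ 1 * ((σ i : ℤ) : ℝ))) + 1 := by
      intro σ
      have h : spinSum (insert i Λ) σ = ((σ i : ℤ) : ℝ) + spinSum Λ σ := Finset.sum_insert hi
      rw [h]
      linear_combination (6 * spinSum Λ σ ^ 2 + 4 * spinSum Λ σ * ((σ i : ℤ) : ℝ)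
        + ((σ i : ℤ) : ℝ) ^ 2 + 1) * spin_sq (σ i)
    simp only [e]
    have I1 := integrable_spinSum_pow μ Λ 4
    have I2 := (integrable_spinSum_pow_mul_spin μ Λ 3 i).const_mul 4
    have I3 := (integrable_spinSum_pow μ Λ 2).const_mul 6
    have I4 := (integrable_spinSum_pow_mul_spin μ Λ 1 i).const_mul 4
    rw [integral_add (((I1.fun_add I2).fun_add I3).fun_add I4) (integrable_const _),
      integral_add ((I1.fun_add I2).fun_add I3) I4, integral_add (I1.fun_add I2) I3, integral_add I1 I2,
      integral_const_mul, integral_const_mul, integral_const_mul,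
      integral_spinSum_pow_mul_spin μ hμ Λ i hi, integral_spinSum_pow_mul_spin μ hμ Λ i hi, ih,
      integral_spinSum_sq μ hμ, Finset.card_insert_of_notMem hi]
    simp
    ring

lemma abs_sqrt_sub_sqrt_le {x y : ℝ} (hx : 0 ≤ x) (hy : 0 ≤ y) : |√x - √y| ≤ √|x - y| := by
  have key : ∀ a b : ℝ, 0 ≤ b → √a - √b ≤ √|a - b| := by
    intro a b hb
    rw [sub_le_iff_le_add]
    refine Real.sqrt_le_iff.2 ⟨by positivity, ?_⟩
    rw [add_sq, Real.sq_sqrt hb, Real.sq_sqrt (abs_nonneg _)]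
    have h : 0 ≤ 2 * √|a - b| * √b := by positivity
    linarith [le_abs_self (a - b)]
  rw [abs_sub_le_iff]
  exact ⟨key x y hy, by rw [abs_sub_comm]; exact key y x hx⟩

lemma lipschitz_gL (L : ℕ) (σ η : Ω) : |gL L σ - gL L η| ≤ 4 * d2 L σ η := by
  have h1 : |mL L σ - mL L η| ≤
      2 * ∑ i ∈ Finset.Icc (-(L : ℤ)) (L : ℤ), if σ i ≠ η i then (1 : ℝ) else 0 := by
    unfold mL
    rw [← Finset.sum_sub_distrib, Finset.mul_sum]
    refine (Finset.abs_sum_le_sum_abs _ _).trans (Finset.sum_le_sum fun i _ => ?_)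
    by_cases h : σ i = η i
    · simp [h]
    · have := abs_sub ((σ i : ℤ) : ℝ) ((η i : ℤ) : ℝ)
      rw [abs_spin, abs_spin] at this
      simp only [ne_eq, h, not_false_eq_true, if_true]
      linarith
  unfold gL d2
  refine (abs_sqrt_sub_sqrt_le (abs_nonneg _) (abs_nonneg _)).trans ?_
  refine (Real.sqrt_le_sqrt ((abs_abs_sub_abs_le_abs_sub _ _).trans h1)).trans ?_
  rw [Real.sqrt_mul (by norm_num)]
  refine mul_le_mul_of_nonneg_right ?_ (Real.sqrt_nonneg _)
  rw [Real.sqrt_le_left (by norm_num)]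
  norm_num

/-- The pointwise bound behind the divergence; it is applied with `s = n^{1/4}` and `x = g_L`. -/
lemma exp_sub_ge {x s : ℝ} (hx : 0 ≤ x) :
    (x ^ 8 - 2 * s ^ 4 * x ^ 4) / (11 ^ 8 * (Nat.factorial 8 : ℝ)) ≤ Real.exp (x - s) := by
  have hf : (0 : ℝ) < (Nat.factorial 8 : ℝ) := by positivity
  rw [div_le_iff₀ (by positivity)]
  by_cases h : x ^ 4 ≤ 2 * s ^ 4
  · have h0 : x ^ 8 - 2 * s ^ 4 * x ^ 4 ≤ 0 := by
      have : x ^ 4 * (x ^ 4 - 2 * s ^ 4) ≤ 0 :=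
        mul_nonpos_of_nonneg_of_nonpos (by positivity) (by linarith)
      linarith [this, show x ^ 4 * (x ^ 4 - 2 * s ^ 4) = x ^ 8 - 2 * s ^ 4 * x ^ 4 by ring]
    exact h0.trans (by positivity)
  · push Not at h
    -- `1.1⁴ < 2`, so `x ≥ 1.1 s`, that is `x - s ≥ x / 11`.
    have hxs : 11 / 10 * s ≤ x := by
      refine le_of_pow_le_pow_left₀ (n := 4) (by norm_num) hx ?_
      have : 0 ≤ s ^ 4 := by positivity
      rw [mul_pow]
      norm_num
      linarith
    have h1 : (x / 11) ^ 8 / (Nat.factorial 8 : ℝ) ≤ Real.exp (x - s) :=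
      (Real.pow_div_factorial_le_exp (x / 11) (by positivity) 8).trans
        (Real.exp_le_exp.2 (by linarith))
    rw [div_le_iff₀ hf, div_pow, div_le_iff₀ (by positivity)] at h1
    have h2 : 0 ≤ 2 * s ^ 4 * x ^ 4 := by positivity
    linarith [h1, h2]

/-- Pointwise form of Jensen's inequality for the fourth power. -/
lemma le_of_pow_four {x s : ℝ} (hs : 0 < s) : x ≤ (1 / (4 * s ^ 3)) * x ^ 4 + 3 / 4 * s := by
  have e : (1 / (4 * s ^ 3)) * x ^ 4 + 3 / 4 * s - x
      = (x - s) ^ 2 * ((x + s) ^ 2 + 2 * s ^ 2) / (4 * s ^ 3) := by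
    field_simp
    ring
  have : 0 ≤ (x - s) ^ 2 * ((x + s) ^ 2 + 2 * s ^ 2) / (4 * s ^ 3) := by positivity
  linarith

lemma gL_pow_four (L : ℕ) (σ : Ω) : gL L σ ^ 4 = mL L σ ^ 2 := by
  unfold gL
  rw [show (4 : ℕ) = 2 * 2 from rfl, pow_mul, Real.sq_sqrt (abs_nonneg _), sq_abs]

lemma gL_pow_eight (L : ℕ) (σ : Ω) : gL L σ ^ 8 = mL L σ ^ 4 := by
  rw [show (8 : ℕ) = 4 * 2 from rfl, pow_mul, gL_pow_four, ← pow_mul]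

lemma card_box (L : ℕ) : ((Finset.Icc (-(L : ℤ)) (L : ℤ)).card : ℝ) = 2 * L + 1 := by
  rw [Int.card_Icc, show ((L : ℤ) + 1 - -(L : ℤ)).toNat = 2 * L + 1 by omega]
  push_cast
  ring

lemma measurable_gL (L : ℕ) : Measurable (gL L) :=
  (continuous_abs.measurable.comp (measurable_spinSum (Finset.Icc (-(L : ℤ)) (L : ℤ)))).sqrt

lemma gL_le (L : ℕ) (σ : Ω) : gL L σ ≤ √(2 * L + 1) := by
  rw [← card_box]
  exact Real.sqrt_le_sqrt (abs_spinSum_le _ σ)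

lemma integral_exp_ge (μ : Measure Ω) [IsProbabilityMeasure μ]
    (hμ : ∀ (Λ : Finset ℤ) (η : ℤ → ℤˣ),
      μ {σ : Ω | ∀ i ∈ Λ, σ i = η i} = (1 / 2 : ENNReal) ^ Λ.card) (L : ℕ) :
    (4 * (L : ℝ) ^ 2 - 1) / (11 ^ 8 * (Nat.factorial 8 : ℝ))
      ≤ ∫ σ, Real.exp (gL L σ - ∫ τ, gL L τ ∂μ) ∂μ := by
  obtain ⟨s, hs, hs4⟩ : ∃ s : ℝ, 0 < s ∧ s ^ 4 = 2 * L + 1 := by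
    refine ⟨√√(2 * (L : ℝ) + 1), by positivity, ?_⟩
    rw [show (4 : ℕ) = 2 * 2 from rfl, pow_mul, Real.sq_sqrt (Real.sqrt_nonneg _),
      Real.sq_sqrt (by positivity)]
  have M2 : ∫ σ, mL L σ ^ 2 ∂μ = s ^ 4 := by
    rw [hs4, ← card_box]; exact integral_spinSum_sq μ hμ _
  have M4 : ∫ σ, mL L σ ^ 4 ∂μ = 3 * (s ^ 4) ^ 2 - 2 * s ^ 4 := by
    rw [hs4, ← card_box]; exact integral_spinSum_four μ hμ _
  have I2 : Integrable (fun σ => mL L σ ^ 2) μ := integrable_spinSum_pow μ _ 2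
  have I4 : Integrable (fun σ => mL L σ ^ 4) μ := integrable_spinSum_pow μ _ 4
  have Ig : Integrable (gL L) μ := by
    refine Integrable.of_bound (measurable_gL L).aestronglyMeasurable (√(2 * L + 1))
      (ae_of_all _ fun σ => ?_)
    rw [Real.norm_eq_abs, abs_of_nonneg (show 0 ≤ gL L σ from Real.sqrt_nonneg _)]
    exact gL_le L σ
  have Ie : ∀ c : ℝ, Integrable (fun σ => Real.exp (gL L σ - c)) μ := by
    intro c
    refine Integrable.of_bound
      (Real.measurable_exp.comp ((measurable_gL L).sub_const c)).aestronglyMeasurable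
      (Real.exp (√(2 * L + 1) - c)) (ae_of_all _ fun σ => ?_)
    rw [Real.norm_eq_abs, abs_of_pos (Real.exp_pos _)]
    exact Real.exp_le_exp.2 (by linarith [gL_le L σ])
  have ha : ∫ τ, gL L τ ∂μ ≤ s := by
    have h : ∫ τ, gL L τ ∂μ ≤ ∫ τ, ((1 / (4 * s ^ 3)) * mL L τ ^ 2 + 3 / 4 * s) ∂μ := by
      refine integral_mono Ig ((I2.const_mul _).add (integrable_const _)) fun τ => ?_
      have := le_of_pow_four (x := gL L τ) hs
      rwa [gL_pow_four] at this
    rw [integral_add (I2.const_mul _) (integrable_const _), integral_const_mul, M2] at h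
    refine h.trans (le_of_eq ?_)
    simp
    field_simp
    norm_num
  calc (4 * (L : ℝ) ^ 2 - 1) / (11 ^ 8 * (Nat.factorial 8 : ℝ))
      = ∫ σ, (mL L σ ^ 4 - 2 * s ^ 4 * mL L σ ^ 2) / (11 ^ 8 * (Nat.factorial 8 : ℝ)) ∂μ := by
        rw [integral_div, integral_sub I4 (I2.const_mul _), integral_const_mul, M2, M4, hs4]
        congr 1
        ring
    _ ≤ ∫ σ, Real.exp (gL L σ - s) ∂μ := by
        refine integral_mono ((I4.sub (I2.const_mul _)).div_const _) (Ie s) fun σ => ?_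
        have := exp_sub_ge (x := gL L σ) (s := s) (Real.sqrt_nonneg _)
        rwa [gL_pow_four, gL_pow_eight] at this
    _ ≤ ∫ σ, Real.exp (gL L σ - ∫ τ, gL L τ ∂μ) ∂μ :=
        integral_mono (Ie s) (Ie _) fun σ => Real.exp_le_exp.2 (by linarith)

/-- Let `μ` be the product measure on `Ω = {-1,1}^ℤ` with
`μ(σ_i = 1) = μ(σ_i = -1) = 1/2` for each site (characterized by its cylinder
probabilities). Then `sup_L Lip₂(g_L) ≤ 4`, i.e. `|g_L σ - g_L η| ≤ 4 d_{2,Λ_L}(σ,η)`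
for all `L`, `σ`, `η`, while `log ∫ e^{g_L − μ(g_L)} dμ → +∞` as `L → ∞`
(equivalently, its liminf is `+∞`). -/
theorem lipschitz_gcb_fails (μ : Measure Ω) [IsProbabilityMeasure μ]
    (hμ : ∀ (Λ : Finset ℤ) (η : ℤ → ℤˣ),
      μ {σ : Ω | ∀ i ∈ Λ, σ i = η i} = (1 / 2 : ENNReal) ^ Λ.card) :
    (∀ (L : ℕ) (σ η : Ω), |gL L σ - gL L η| ≤ 4 * d2 L σ η) ∧
    Tendsto (fun L : ℕ =>
        Real.log (∫ σ, Real.exp (gL L σ - ∫ τ, gL L τ ∂μ) ∂μ)) atTop atTop := by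
  refine ⟨lipschitz_gL, Real.tendsto_log_atTop.comp ?_⟩
  refine tendsto_atTop_mono (integral_exp_ge μ hμ) ?_
  refine Tendsto.atTop_div_const (by positivity) (tendsto_atTop_add_const_right _ (-1) ?_)
  exact ((tendsto_pow_atTop (two_ne_zero)).comp tendsto_natCast_atTop_atTop).const_mul_atTop
    (by norm_num)

end GCBStmt19
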